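/- For every γ ∈ (1,2), every N ≥ 1, and every nonzero y ∈ ℝ^N, one has yᵀ Â_γ y < yᵀ A_γ y < (4/3)·yᵀ Â_γ y; consequently every eigenvalue of Â_γ^{−1} A_γ lies strictly between 1 and 4/3. -/

import Mathlib

open Matrix

/-- The fourth-order coefficients `s_k^{(γ)}`. -/
noncomputable def sCoef (γ : ℝ) (k : ℤ) : ℝ :=
  ((-1 : ℝ) ^ k * Real.Gamma (γ + 1) /
      (Real.Gamma (γ / 2 - k + 1) * Real.Gamma (γ / 2 + k + 1))) *
    (1 + γ * (γ + 1) * (γ + 2) / (6 * (γ - 2 * k + 2) * (γ + 2 * k + 2)))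

/-- The second-order coefficients `g_k^{(γ)}`. -/
noncomputable def gCoef (γ : ℝ) (k : ℤ) : ℝ :=
  (-1 : ℝ) ^ k * Real.Gamma (γ + 1) /
    (Real.Gamma (γ / 2 - k + 1) * Real.Gamma (γ / 2 + k + 1))

/-- `A_γ`: symmetric Toeplitz matrix with `(i,j)` entry `s_{i-j}^{(γ)}`. -/
noncomputable def Amat (γ : ℝ) (N : ℕ) : Matrix (Fin N) (Fin N) ℝ :=
  fun i j => sCoef γ ((i : ℤ) - (j : ℤ))

/-- `Â_γ`: symmetric Toeplitz matrix with `(i,j)` entry `g_{i-j}^{(γ)}`. -/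
noncomputable def Ahat (γ : ℝ) (N : ℕ) : Matrix (Fin N) (Fin N) ℝ :=
  fun i j => gCoef γ ((i : ℤ) - (j : ℤ))

/-!
Since `24 (s_k - g_k) = γ (2 g_k - g_{k-1} - g_{k+1})`, the difference `A_γ - Â_γ` is `γ / 24` times
a congruence of the Toeplitz matrix of `g` of size `N + 1` by the bidiagonal matrix sending `y` to
`(y, 0) - (0, y)`. The map `y ↦ (y, 0) + (0, y)` gives the complementary congruence, and the two add
up to `4 Â_γ`. Both are positive definite, because the `g_k` with `k ≠ 0` are negative and have
partial sums that leave `Â_γ` strictly diagonally dominant.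
-/

section PosDef

variable {n : Type*} [Fintype n] [DecidableEq n]

open scoped ComplexOrder in
theorem posDef_of_sum_norm_lt_diag {𝕜 : Type*} [RCLike 𝕜] {A : Matrix n n 𝕜} (hA : A.IsHermitian)
    (hdom : ∀ i, ∑ j ∈ Finset.univ.erase i, ‖A i j‖ < RCLike.re (A i i)) : A.PosDef := by
  refine hA.posDef_iff_eigenvalues_pos.mpr fun i => ?_
  have heig : Module.End.HasEigenvalue (Matrix.toLin' A) (hA.eigenvalues i : 𝕜) := by
    rw [Module.End.hasEigenvalue_iff_mem_spectrum, spectrum_toLin',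
      hA.spectrum_eq_image_range]
    exact ⟨_, ⟨i, rfl⟩, rfl⟩
  obtain ⟨k, hk⟩ := eigenvalue_mem_ball heig
  have hdist : RCLike.re (A k k) - hA.eigenvalues i ≤ ∑ j ∈ Finset.univ.erase k, ‖A k j‖ :=
    calc RCLike.re (A k k) - hA.eigenvalues i
      _ = RCLike.re (A k k - (hA.eigenvalues i : 𝕜)) := by rw [map_sub, RCLike.ofReal_re]
      _ ≤ ‖A k k - (hA.eigenvalues i : 𝕜)‖ := RCLike.re_le_norm _
      _ ≤ _ := mem_closedBall_iff_norm'.mp hk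
  linarith [hdom k]

theorem eigenvalue_inv_mul_mem_Ioo {A B : Matrix n n ℝ} {a b μ : ℝ} {v : n → ℝ} (hB : B.PosDef)
    (ha : (A - a • B).PosDef) (hb : (b • B - A).PosDef) (hv : v ≠ 0)
    (hμ : (B⁻¹ * A) *ᵥ v = μ • v) : μ ∈ Set.Ioo a b := by
  have hAv : A *ᵥ v = μ • B *ᵥ v := by
    rw [← mulVec_smul, ← hμ, mulVec_mulVec,
      mul_nonsing_inv_cancel_left _ _ ((isUnit_iff_isUnit_det B).mp hB.isUnit)]
  have hBpos : 0 < v ⬝ᵥ B *ᵥ v := by simpa using hB.dotProduct_mulVec_pos hv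
  have hlower : 0 < (μ - a) * (v ⬝ᵥ B *ᵥ v) := by
    simpa [sub_mulVec, smul_mulVec, hAv, sub_mul] using ha.dotProduct_mulVec_pos hv
  have hupper : 0 < (b - μ) * (v ⬝ᵥ B *ᵥ v) := by
    simpa [sub_mulVec, smul_mulVec, hAv, sub_mul] using hb.dotProduct_mulVec_pos hv
  exact ⟨sub_pos.mp (pos_of_mul_pos_left hlower hBpos.le),
    sub_pos.mp (pos_of_mul_pos_left hupper hBpos.le)⟩

end PosDef

section Toeplitz

/-- The `N × N` Toeplitz matrix with symbol coefficients `c`: its `(i, j)` entry is `c (i - j)`. -/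
def toeplitz {R : Type*} (c : ℤ → R) (N : ℕ) : Matrix (Fin N) (Fin N) R :=
  of fun i j => c ((i : ℤ) - (j : ℤ))

theorem toeplitz_apply {R : Type*} (c : ℤ → R) {N : ℕ} (i j : Fin N) :
    toeplitz c N i j = c ((i : ℤ) - (j : ℤ)) :=
  rfl

theorem toeplitz_isHermitian {R : Type*} [Star R] {c : ℤ → R} (hc : ∀ k, star (c k) = c (-k))
    (N : ℕ) : (toeplitz c N).IsHermitian :=
  IsHermitian.ext fun i j => by simp only [toeplitz_apply, hc, neg_sub]

theorem sum_erase_even_eq_sum_range_add_sum_range {M : Type*} [AddCommGroup M] {f : ℤ → M}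
    (hf : ∀ k, f (-k) = f k) {N : ℕ} (i : Fin N) :
    ∑ j ∈ Finset.univ.erase i, f ((i : ℤ) - (j : ℤ)) =
      ∑ k ∈ Finset.range i, f (k + 1) + ∑ k ∈ Finset.range (N - (i + 1)), f (k + 1) := by
  have hbelow : ∑ j ∈ Finset.range i, f ((i : ℤ) - j) = ∑ k ∈ Finset.range i, f (k + 1) := by
    rw [← Finset.sum_range_reflect]
    refine Finset.sum_congr rfl fun k hk => congrArg f ?_
    have := Finset.mem_range.mp hk
    omega
  have habove : ∑ j ∈ Finset.Ico ((i : ℕ) + 1) N, f ((i : ℤ) - j) =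
      ∑ k ∈ Finset.range (N - (i + 1)), f (k + 1) := by
    rw [Finset.sum_Ico_eq_sum_range]
    refine Finset.sum_congr rfl fun k _ => ?_
    rw [← hf]
    exact congrArg f (by push_cast; ring)
  rw [Finset.sum_erase_eq_sub (Finset.mem_univ i),
    Fin.sum_univ_eq_sum_range (fun j => f ((i : ℤ) - (j : ℤ))),
    ← Finset.sum_range_add_sum_Ico _ (Nat.succ_le_of_lt i.isLt), Finset.sum_range_succ,
    hbelow, habove]
  abel

open scoped ComplexOrder in
theorem toeplitz_posDef_of_two_mul_sum_norm_lt {𝕜 : Type*} [RCLike 𝕜] {c : ℤ → 𝕜}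
    (hc : ∀ k, star (c k) = c (-k))
    (hdom : ∀ m : ℕ, 2 * ∑ k ∈ Finset.range m, ‖c (k + 1)‖ < RCLike.re (c 0)) (N : ℕ) :
    (toeplitz c N).PosDef := by
  refine posDef_of_sum_norm_lt_diag (toeplitz_isHermitian hc N) fun i => ?_
  have heven (k : ℤ) : ‖c (-k)‖ = ‖c k‖ := by rw [← hc, norm_star]
  simp only [toeplitz_apply, sub_self,
    sum_erase_even_eq_sum_range_add_sum_range (f := fun k => ‖c k‖) heven]
  linarith [hdom i, hdom (N - (i + 1))]

/-- The `(N + 1) × N` matrix of `y ↦ (y, 0) + e • (0, y)`, i.e. of multiplication by `1 + e X` on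
polynomials of degree less than `N`. -/
def bidiagonal {R : Type*} [Semiring R] (e : R) (N : ℕ) : Matrix (Fin (N + 1)) (Fin N) R :=
  of fun a j => (if a = j.castSucc then 1 else 0) + if a = j.succ then e else 0

theorem bidiagonal_mulVec_injective {R : Type*} [CommRing R] (e : R) (N : ℕ) :
    Function.Injective (bidiagonal e N).mulVec := by
  refine (injective_iff_map_eq_zero (bidiagonal e N).mulVecLin).mpr fun y hy => ?_
  ext j
  induction j using WellFoundedLT.induction with
  | ind j ih =>
    have hrow : y j + ∑ l, (if j.castSucc = l.succ then e * y l else 0) = 0 := by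
      simpa [mulVec, dotProduct, bidiagonal, add_mul, Finset.sum_add_distrib]
        using congrFun hy j.castSucc
    rwa [Finset.sum_eq_zero, add_zero] at hrow
    intro l _
    split_ifs with hjl
    · rw [ih l (Fin.castSucc_lt_castSucc_iff.mp (hjl ▸ Fin.castSucc_lt_succ)), Pi.zero_apply,
        mul_zero]
    · rfl

theorem conjTranspose_bidiagonal_mul_toeplitz_mul_bidiagonal {R : Type*} [CommRing R] [StarRing R]
    (c : ℤ → R) (e : R) (N : ℕ) :
    (bidiagonal e N)ᴴ * toeplitz c (N + 1) * bidiagonal e N =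
      toeplitz (fun k => (1 + star e * e) * c k + e * c (k - 1) + star e * c (k + 1)) N := by
  ext i j
  simp only [mul_apply, conjTranspose_apply, toeplitz_apply, bidiagonal, of_apply, star_add,
    apply_ite star, star_one, star_zero, add_mul, mul_add, ite_mul, mul_ite, one_mul, mul_one,
    zero_mul, mul_zero, Finset.sum_add_distrib, Finset.sum_ite_eq', Finset.mem_univ, if_true,
    Fin.val_castSucc, Fin.val_succ, Nat.cast_add, Nat.cast_one, ← sub_sub, ← sub_add_eq_add_sub]
  ring_nf

end Toeplitz

section Coefficients

-- Valid at the poles too, where `Real.Gamma` and hence its inverse are `0`.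
theorem inv_Gamma_eq_self_mul_inv_Gamma_add_one (x : ℝ) :
    (Real.Gamma x)⁻¹ = x * (Real.Gamma (x + 1))⁻¹ := by
  rcases eq_or_ne x 0 with rfl | hx
  · simp [Real.Gamma_zero]
  · rw [Real.Gamma_add_one hx, mul_inv, mul_inv_cancel_left₀ hx]

theorem gCoef_add_one (γ : ℝ) (k : ℤ) :
    (γ / 2 + k + 1) * gCoef γ (k + 1) = (k - γ / 2) * gCoef γ k := by
  have hminus := inv_Gamma_eq_self_mul_inv_Gamma_add_one (γ / 2 - k)
  have hplus := inv_Gamma_eq_self_mul_inv_Gamma_add_one (γ / 2 + k + 1)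
  simp only [gCoef, div_eq_mul_inv _ (_ * _), mul_inv, Int.cast_add, Int.cast_one,
    zpow_add_one₀ (neg_ne_zero.mpr (one_ne_zero' ℝ)),
    show γ / 2 - (k + 1) + 1 = γ / 2 - k by ring,
    show γ / 2 + (k + 1) + 1 = γ / 2 + k + 1 + 1 by ring]
  rw [hminus, hplus]
  ring

theorem gCoef_neg (γ : ℝ) (k : ℤ) : gCoef γ (-k) = gCoef γ k := by
  have hsign : (-1 : ℝ) ^ (-k) = (-1) ^ k := by rw [← _root_.inv_zpow', inv_neg_one]
  rw [gCoef, gCoef, hsign, Int.cast_neg, sub_neg_eq_add, ← sub_eq_add_neg,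
    mul_comm (Real.Gamma (γ / 2 + k + 1))]

theorem gCoef_zero_add_two_mul_sum_range (γ : ℝ) (m : ℕ) :
    γ / 2 * (gCoef γ 0 + 2 * ∑ k ∈ Finset.range m, gCoef γ (k + 1)) =
      (γ / 2 - m) * gCoef γ m := by
  induction m with
  | zero => simp
  | succ m ih =>
    rw [Finset.sum_range_succ]
    have hrec := gCoef_add_one γ m
    push_cast at hrec ⊢
    linear_combination ih + hrec

variable {γ : ℝ}

theorem sCoef_eq_gCoef_add_second_difference (hγ : ∀ m : ℤ, γ ≠ 2 * m) (k : ℤ) :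
    sCoef γ k = gCoef γ k + γ / 24 * (2 * gCoef γ k - gCoef γ (k - 1) - gCoef γ (k + 1)) := by
  have hplus : γ + 2 * k + 2 ≠ 0 := fun h => hγ (-k - 1) (by push_cast; linarith)
  have hminus : γ - 2 * k + 2 ≠ 0 := fun h => hγ (k - 1) (by push_cast; linarith)
  have hnext : gCoef γ (k + 1) = (2 * k - γ) * gCoef γ k / (γ + 2 * k + 2) := by
    rw [eq_div_iff hplus]
    linear_combination 2 * gCoef_add_one γ k
  have hprev : gCoef γ (k - 1) = -(γ + 2 * k) * gCoef γ k / (γ - 2 * k + 2) := by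
    have hrec := gCoef_add_one γ (k - 1)
    rw [sub_add_cancel] at hrec
    push_cast at hrec
    rw [eq_div_iff hminus]
    linear_combination 2 * hrec
  have hs : sCoef γ k = gCoef γ k *
      (1 + γ * (γ + 1) * (γ + 2) / (6 * (γ - 2 * k + 2) * (γ + 2 * k + 2))) := rfl
  rw [hs, hnext, hprev]
  field_simp
  ring

theorem gCoef_zero_pos (hγ : -1 < γ) : 0 < gCoef γ 0 := by
  have hnum : 0 < Real.Gamma (γ + 1) := Real.Gamma_pos_of_pos (by linarith)
  have hden : 0 < Real.Gamma (γ / 2 + 1) := Real.Gamma_pos_of_pos (by linarith)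
  simpa [gCoef] using div_pos hnum (mul_pos hden hden)

theorem gCoef_add_one_neg (hγ : γ ∈ Set.Ioo 0 2) (n : ℕ) : gCoef γ (n + 1) < 0 := by
  obtain ⟨hγ0, hγ2⟩ := hγ
  induction n with
  | zero =>
    have hrec : (γ / 2 + 1) * gCoef γ 1 = -(γ / 2) * gCoef γ 0 := by
      simpa using gCoef_add_one γ 0
    have hzero : 0 < gCoef γ 0 := gCoef_zero_pos (by linarith)
    have hone : gCoef γ 1 < 0 := neg_of_mul_neg_right
      (hrec ▸ mul_neg_of_neg_of_pos (by linarith) hzero) (by positivity)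
    simpa using hone
  | succ n ih =>
    have hrec := gCoef_add_one γ (n + 1)
    push_cast at hrec ⊢
    have hfactor : (0 : ℝ) < n + 1 - γ / 2 := by linarith [(n.cast_nonneg : (0 : ℝ) ≤ n)]
    exact neg_of_mul_neg_right (hrec ▸ mul_neg_of_pos_of_neg hfactor ih) (by positivity)

theorem two_mul_sum_norm_gCoef_lt (hγ : γ ∈ Set.Ioo 0 2) (m : ℕ) :
    2 * ∑ k ∈ Finset.range m, ‖gCoef γ (k + 1)‖ < gCoef γ 0 := by
  have hpos : 0 < (γ / 2 - m) * gCoef γ m := by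
    cases m with
    | zero => simpa using mul_pos (half_pos hγ.1) (gCoef_zero_pos (by linarith [hγ.1]))
    | succ n =>
      have hneg : γ / 2 - (n + 1 : ℕ) < 0 := by
        push_cast
        linarith [hγ.2, (n.cast_nonneg : (0 : ℝ) ≤ n)]
      exact mul_pos_of_neg_of_neg hneg (gCoef_add_one_neg hγ n)
  rw [← gCoef_zero_add_two_mul_sum_range] at hpos
  have hsum := pos_of_mul_pos_right hpos (half_pos hγ.1).le
  simp only [Real.norm_eq_abs, abs_of_neg (gCoef_add_one_neg hγ _), Finset.sum_neg_distrib]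
  linarith

end Coefficients

section Comparison

theorem Amat_eq_toeplitz (γ : ℝ) (N : ℕ) : Amat γ N = toeplitz (sCoef γ) N :=
  rfl

theorem Ahat_eq_toeplitz (γ : ℝ) (N : ℕ) : Ahat γ N = toeplitz (gCoef γ) N :=
  rfl

variable {γ : ℝ}

theorem Amat_sub_Ahat_eq (hγ : ∀ m : ℤ, γ ≠ 2 * m) (N : ℕ) :
    Amat γ N - Ahat γ N =
      (γ / 24) • ((bidiagonal (-1 : ℝ) N)ᴴ * Ahat γ (N + 1) * bidiagonal (-1 : ℝ) N) := by
  rw [Amat_eq_toeplitz, Ahat_eq_toeplitz, Ahat_eq_toeplitz,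
    conjTranspose_bidiagonal_mul_toeplitz_mul_bidiagonal]
  ext i j
  simp only [Matrix.sub_apply, Matrix.smul_apply, toeplitz_apply, star_trivial, smul_eq_mul,
    sCoef_eq_gCoef_add_second_difference hγ]
  ring

theorem smul_Ahat_sub_Amat_eq (hγ : ∀ m : ℤ, γ ≠ 2 * m) (N : ℕ) :
    (1 + γ / 6) • Ahat γ N - Amat γ N =
      (γ / 24) • ((bidiagonal (1 : ℝ) N)ᴴ * Ahat γ (N + 1) * bidiagonal (1 : ℝ) N) := by
  rw [Amat_eq_toeplitz, Ahat_eq_toeplitz, Ahat_eq_toeplitz,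
    conjTranspose_bidiagonal_mul_toeplitz_mul_bidiagonal]
  ext i j
  simp only [Matrix.sub_apply, Matrix.smul_apply, toeplitz_apply, star_trivial, smul_eq_mul,
    sCoef_eq_gCoef_add_second_difference hγ]
  ring

theorem ne_two_mul_int (hγ : γ ∈ Set.Ioo 0 2) (m : ℤ) : γ ≠ 2 * m := by
  rintro rfl
  have hpos : 0 < m := by exact_mod_cast (by linarith [hγ.1] : (0 : ℝ) < m)
  have hlt : m < 1 := by exact_mod_cast (by linarith [hγ.2] : (m : ℝ) < 1)
  omega

theorem Ahat_posDef (hγ : γ ∈ Set.Ioo 0 2) (N : ℕ) : (Ahat γ N).PosDef :=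
  toeplitz_posDef_of_two_mul_sum_norm_lt (fun k => (gCoef_neg γ k).symm)
    (two_mul_sum_norm_gCoef_lt hγ) N

theorem Amat_sub_Ahat_posDef (hγ : γ ∈ Set.Ioo 0 2) (N : ℕ) : (Amat γ N - Ahat γ N).PosDef := by
  rw [Amat_sub_Ahat_eq (ne_two_mul_int hγ)]
  exact ((Ahat_posDef hγ (N + 1)).conjTranspose_mul_mul_same
    (bidiagonal_mulVec_injective (-1) N)).smul (div_pos hγ.1 (by norm_num))

theorem smul_Ahat_sub_Amat_posDef (hγ : γ ∈ Set.Ioo 0 2) (N : ℕ) :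
    ((1 + γ / 6) • Ahat γ N - Amat γ N).PosDef := by
  rw [smul_Ahat_sub_Amat_eq (ne_two_mul_int hγ)]
  exact ((Ahat_posDef hγ (N + 1)).conjTranspose_mul_mul_same
    (bidiagonal_mulVec_injective 1 N)).smul (div_pos hγ.1 (by norm_num))

end Comparison

theorem stmt_15_general {γ : ℝ} (hγ : γ ∈ Set.Ioo 0 2) (N : ℕ) :
    (∀ y : Fin N → ℝ, y ≠ 0 →
      y ⬝ᵥ Ahat γ N *ᵥ y < y ⬝ᵥ Amat γ N *ᵥ y ∧
      y ⬝ᵥ Amat γ N *ᵥ y < (1 + γ / 6) * (y ⬝ᵥ Ahat γ N *ᵥ y)) ∧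
    (∀ (μ : ℝ) (v : Fin N → ℝ), v ≠ 0 →
      ((Ahat γ N)⁻¹ * Amat γ N) *ᵥ v = μ • v → 1 < μ ∧ μ < 1 + γ / 6) := by
  have hlower := Amat_sub_Ahat_posDef hγ N
  have hupper := smul_Ahat_sub_Amat_posDef hγ N
  refine ⟨fun y hy => ⟨?_, ?_⟩, fun μ v hv hμ => ?_⟩
  · simpa [sub_mulVec] using hlower.dotProduct_mulVec_pos hy
  · simpa [sub_mulVec, smul_mulVec] using hupper.dotProduct_mulVec_pos hy
  · exact eigenvalue_inv_mul_mem_Ioo (Ahat_posDef hγ N) (by rwa [one_smul]) hupper hv hμ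

theorem stmt_15 (γ : ℝ) (hγ : γ ∈ Set.Ioo (1 : ℝ) 2) (N : ℕ) (hN : 1 ≤ N) :
    (∀ y : Fin N → ℝ, y ≠ 0 →
      y ⬝ᵥ Ahat γ N *ᵥ y < y ⬝ᵥ Amat γ N *ᵥ y ∧
      y ⬝ᵥ Amat γ N *ᵥ y < (4 / 3) * (y ⬝ᵥ Ahat γ N *ᵥ y)) ∧
    (∀ (μ : ℝ) (v : Fin N → ℝ), v ≠ 0 →
      ((Ahat γ N)⁻¹ * Amat γ N) *ᵥ v = μ • v → 1 < μ ∧ μ < 4 / 3) := by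
  have hγ' : γ ∈ Set.Ioo 0 2 := Set.Ioo_subset_Ioo_left zero_le_one hγ
  obtain ⟨hform, heig⟩ := stmt_15_general hγ' N
  have hlt : 1 + γ / 6 < 4 / 3 := by linarith [hγ.2]
  refine ⟨fun y hy => (hform y hy).imp_right fun hy' => ?_,
    fun μ v hv hμ => (heig μ v hv hμ).imp_right fun hμ' => hμ'.trans hlt⟩
  have hpos : 0 < y ⬝ᵥ Ahat γ N *ᵥ y := by
    simpa using (Ahat_posDef hγ' N).dotProduct_mulVec_pos hy
  exact hy'.trans (mul_lt_mul_of_pos_right hlt hpos)
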